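/- arXiv:1705.07305 — 5 statements merged into one kernel-verified Lean document; each statement's English description precedes it below -/
import Mathlib

section
/- Let c, d, e, f > 0 be real numbers, and let ε, ϑ > 0 and 𝒳, 𝒴 be real numbers with 𝒳 − ϑ > 0 and 𝒴 − ε > 0. Define the sets U = {(x,y) : 𝒳 − ϑ ≤ x ≤ 𝒳 and y > 0}, V = {(x,y) : x > 0 and 𝒴 − ε ≤ y ≤ 𝒴}, and R = U ∪ V. Then there exist a > 0 and b > 0 such that h(x,y) > 0 for every (x,y) ∈ R. -/
/-! Put `p = 𝒳 - ϑ`, `q = 𝒴 - ε`. Where `p ≤ x ≤ 𝒳`, `y > 0`, the negative terms of `h` are at most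
`c𝒳y² + s y + e𝒳` with `s = d𝒳 + f`, and `s y ≤ s (y² + 1)`; so `b ≥ c𝒳 + s` and
`a p² > e𝒳 + s` suffice. Where `x > 0`, `q ≤ y ≤ 𝒴`, they are at most `t x + f𝒴` with
`t = c𝒴² + d𝒴 + e`, and `t x ≤ t (x² + 1)`; so `a ≥ t` and `b q² > f𝒴 + t` suffice.
All four conditions are lower bounds on `a` and `b`, hence compatible. -/

/-- For real parameters `a b c d e f`,
`h (x, y) = a*x² + b*y² − c*x*y² − d*x*y − e*x − f*y`.
If `c, d, e, f > 0`, `ε, ϑ > 0`, `𝒳 − ϑ > 0` and `𝒴 − ε > 0`, then there exist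
`a > 0` and `b > 0` such that `h (x, y) > 0` on the region
`R = U ∪ V` where `U = {(x,y) : 𝒳 − ϑ ≤ x ≤ 𝒳, y > 0}` and
`V = {(x,y) : x > 0, 𝒴 − ε ≤ y ≤ 𝒴}`. -/
theorem stmt_3 (c d e f ε ϑ 𝒳 𝒴 : ℝ) (hc : 0 < c) (hd : 0 < d) (he : 0 < e) (hf : 0 < f)
    (hε : 0 < ε) (hϑ : 0 < ϑ) (hXϑ : 0 < 𝒳 - ϑ) (hYε : 0 < 𝒴 - ε) :
    ∃ a > (0 : ℝ), ∃ b > (0 : ℝ), ∀ x y : ℝ,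
      ((𝒳 - ϑ ≤ x ∧ x ≤ 𝒳 ∧ 0 < y) ∨ (0 < x ∧ 𝒴 - ε ≤ y ∧ y ≤ 𝒴)) →
      0 < a * x ^ 2 + b * y ^ 2 - c * x * y ^ 2 - d * x * y - e * x - f * y := by
  have hX : 0 < 𝒳 := by linarith
  have hY : 0 < 𝒴 := by linarith
  obtain ⟨p, hp⟩ : ∃ p, p = 𝒳 - ϑ := ⟨_, rfl⟩
  obtain ⟨q, hq⟩ : ∃ q, q = 𝒴 - ε := ⟨_, rfl⟩
  rw [← hp] at hXϑ ⊢
  rw [← hq] at hYε ⊢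
  obtain ⟨s, hs⟩ : ∃ s, s = d * 𝒳 + f := ⟨_, rfl⟩
  obtain ⟨t, ht⟩ : ∃ t, t = c * 𝒴 ^ 2 + d * 𝒴 + e := ⟨_, rfl⟩
  have hs0 : 0 < s := by rw [hs]; positivity
  have ht0 : 0 < t := by rw [ht]; positivity
  have key : ∀ z : ℝ, z ≤ z ^ 2 + 1 := fun z => by nlinarith [sq_nonneg (z - 1)]
  obtain ⟨a, hat, hap⟩ : ∃ a, t < a ∧ e * 𝒳 + s < a * p ^ 2 := by
    refine ⟨t + (e * 𝒳 + s) / p ^ 2, by linarith [show 0 < (e * 𝒳 + s) / p ^ 2 by positivity], ?_⟩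
    rw [add_mul, div_mul_cancel₀ _ (by positivity)]
    linarith [show 0 < t * p ^ 2 by positivity]
  obtain ⟨b, hbs, hbq⟩ : ∃ b, c * 𝒳 + s < b ∧ f * 𝒴 + t < b * q ^ 2 := by
    refine ⟨c * 𝒳 + s + (f * 𝒴 + t) / q ^ 2,
      by linarith [show 0 < (f * 𝒴 + t) / q ^ 2 by positivity], ?_⟩
    rw [add_mul, div_mul_cancel₀ _ (by positivity)]
    linarith [show 0 < (c * 𝒳 + s) * q ^ 2 by positivity]
  have ha : 0 < a := by linarith
  have hb : 0 < b := by linarith [show 0 < c * 𝒳 by positivity]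
  refine ⟨a, ha, b, hb, fun x y hxy => ?_⟩
  rcases hxy with ⟨hx₁, hx₂, hy⟩ | ⟨hx, hy₁, hy₂⟩
  · have h₁ : a * p ^ 2 ≤ a * x ^ 2 := by gcongr
    have h₂ : c * x * y ^ 2 ≤ c * 𝒳 * y ^ 2 := by gcongr
    have h₃ : d * x * y ≤ d * 𝒳 * y := by gcongr
    have h₄ : e * x ≤ e * 𝒳 := by gcongr
    have h₅ : s * y ≤ s * (y ^ 2 + 1) := by gcongr; exact key y
    have h₆ : (c * 𝒳 + s) * y ^ 2 ≤ b * y ^ 2 := by gcongr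
    have h₇ : s * y = d * 𝒳 * y + f * y := by rw [hs]; ring
    linarith
  · have hy : 0 < y := by linarith
    have h₁ : b * q ^ 2 ≤ b * y ^ 2 := by gcongr
    have h₂ : c * x * y ^ 2 ≤ c * x * 𝒴 ^ 2 := by gcongr
    have h₃ : d * x * y ≤ d * x * 𝒴 := by gcongr
    have h₄ : f * y ≤ f * 𝒴 := by gcongr
    have h₅ : t * x ≤ t * (x ^ 2 + 1) := by gcongr; exact key x
    have h₆ : t * x ^ 2 ≤ a * x ^ 2 := by gcongr
    have h₇ : t * x = c * x * 𝒴 ^ 2 + d * x * 𝒴 + e * x := by rw [ht]; ring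
    linarith
end

section
/- Let f, r, v : [0, ∞) → ℝⁿ be functions such that f is differentiable, r is continuous, v is differentiable, and v′(t) = f(t) + r(t) for all t ≥ 0. If v(t) → 0, r(t) → 0 and f′(t) → 0 as t → ∞, then f(t) → 0 as t → ∞. -/
/-!
Once `‖v‖`, `‖r‖`, `‖f'‖` are at most `δ` beyond `T`, the mean value inequality gives
`‖f s - f t‖ ≤ δ` for `T ≤ t ≤ s ≤ t + 1`. Hence `s ↦ v s - s • f t`, whose derivative is
`f s + r s - f t`, moves by at most `2δ` over `[t, t + 1]`, that is
`‖v (t + 1) - v t - f t‖ ≤ 2δ`, and so `‖f t‖ ≤ 4δ`.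
-/

/-- If `v′(t) = f(t) + r(t)` on `[0,∞)` with `f` differentiable, `r` continuous,
and `v(t) → 0`, `r(t) → 0`, `f′(t) → 0` as `t → ∞`, then `f(t) → 0` as `t → ∞`. -/
theorem stmt_9 (n : ℕ) (f f' r v : ℝ → EuclideanSpace ℝ (Fin n))
    (hf : ∀ t ∈ Set.Ici (0 : ℝ), HasDerivWithinAt f (f' t) (Set.Ici 0) t)
    (hr : ContinuousOn r (Set.Ici 0))
    (hv : ∀ t ∈ Set.Ici (0 : ℝ), HasDerivWithinAt v (f t + r t) (Set.Ici 0) t)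
    (hv0 : Filter.Tendsto v Filter.atTop (nhds 0))
    (hr0 : Filter.Tendsto r Filter.atTop (nhds 0))
    (hf'0 : Filter.Tendsto f' Filter.atTop (nhds 0)) :
    Filter.Tendsto f Filter.atTop (nhds 0) := by
  rw [Metric.tendsto_atTop]
  intro ε hε
  have hδ : 0 < ε / 5 := by positivity
  obtain ⟨T₁, h₁⟩ := Metric.tendsto_atTop.1 hv0 _ hδ
  obtain ⟨T₂, h₂⟩ := Metric.tendsto_atTop.1 hr0 _ hδ
  obtain ⟨T₃, h₃⟩ := Metric.tendsto_atTop.1 hf'0 _ hδ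
  simp only [dist_zero_right] at h₁ h₂ h₃ ⊢
  refine ⟨max 0 (max T₁ (max T₂ T₃)), fun t ht => ?_⟩
  simp only [ge_iff_le, max_le_iff] at ht
  obtain ⟨ht0, ht1, ht2, ht3⟩ := ht
  have hsub : Set.Icc t (t + 1) ⊆ Set.Ici 0 := fun s hs => ht0.trans hs.1
  have hleft : t ∈ Set.Icc t (t + 1) := ⟨le_rfl, by linarith⟩
  have hright : t + 1 ∈ Set.Icc t (t + 1) := ⟨by linarith, le_rfl⟩
  have hfs : ∀ s ∈ Set.Icc t (t + 1), ‖f s - f t‖ ≤ ε / 5 := by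
    intro s hs
    have h := (convex_Icc t (t + 1)).norm_image_sub_le_of_norm_hasDerivWithin_le
      (fun x hx => (hf x (hsub hx)).mono hsub)
      (fun x hx => (h₃ x (ht3.trans hx.1)).le) hleft hs
    have hst : ‖s - t‖ ≤ 1 := by
      rw [Real.norm_eq_abs, abs_le]
      constructor <;> linarith [hs.1, hs.2]
    exact h.trans (mul_le_of_le_one_right hδ.le hst)
  have hg := (convex_Icc t (t + 1)).norm_image_sub_le_of_norm_hasDerivWithin_le
    (f := fun s => v s - s • f t) (f' := fun s => f s + r s - (1 : ℝ) • f t)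
    (C := ε / 5 + ε / 5)
    (fun x hx => ((hv x (hsub hx)).mono hsub).sub
      ((hasDerivWithinAt_id x _).smul_const (f t)))
    (fun x hx => by
      have e : f x + r x - (1 : ℝ) • f t = (f x - f t) + r x := by
        rw [one_smul]; abel
      rw [e]
      exact (norm_add_le _ _).trans
        (add_le_add (hfs x hx) (h₂ x (ht2.trans hx.1)).le)) hleft hright
  have e : f t = v (t + 1) - v t - ((v (t + 1) - (t + 1) • f t) - (v t - t • f t)) := by
    module
  have hone : ‖t + 1 - t‖ = 1 := by simp
  rw [hone, mul_one] at hg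
  calc ‖f t‖ = ‖v (t + 1) - v t - ((v (t + 1) - (t + 1) • f t) - (v t - t • f t))‖ :=
        congrArg norm e
    _ ≤ ‖v (t + 1)‖ + ‖v t‖ + (ε / 5 + ε / 5) :=
        (norm_sub_le _ _).trans (add_le_add (norm_sub_le _ _) hg)
    _ < ε := by linarith [h₁ t ht1, h₁ (t + 1) (by linarith)]
end

section
/- Let B > 0, A > 0, κ > 0 be real numbers, let t₀ ≥ 0, and let e : [t₀, ∞) → ℝⁿ satisfy e(t₀) = 0 and ‖e(t) − e(s)‖ ≤ B·|t − s| for all t, s ≥ t₀. Suppose t₁ > t₀ is such that ‖e(t₁)‖ ≥ A·exp(−κ·t₁). Then t₁ − t₀ ≥ ξ*, where ξ* is the unique positive solution of B·ξ = A·exp(−κ·(t₀ + ξ)). -/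
/-- Event-time lower bound: suppose `e(t₀) = 0`, `e` is `B`-Lipschitz on `[t₀, ∞)`,
and `t₁ > t₀` is such that `‖e(t₁)‖ ≥ A·exp(−κ·t₁)`. Then `t₁ − t₀ ≥ ξ`, where `ξ`
is the (unique) positive solution of `B·ξ = A·exp(−κ·(t₀ + ξ))`. -/
theorem stmt_13 (n : ℕ) (B A κ t₀ t₁ ξ : ℝ) (hB : 0 < B) (hA : 0 < A) (hκ : 0 < κ)
    (ht₀ : 0 ≤ t₀) (e : ℝ → EuclideanSpace ℝ (Fin n)) (he0 : e t₀ = 0)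
    (hlip : ∀ t s : ℝ, t₀ ≤ t → t₀ ≤ s → ‖e t - e s‖ ≤ B * |t - s|)
    (ht₁ : t₀ < t₁) (htrig : A * Real.exp (-(κ * t₁)) ≤ ‖e t₁‖)
    (hξpos : 0 < ξ) (hξeq : B * ξ = A * Real.exp (-(κ * (t₀ + ξ)))) :
    ξ ≤ t₁ - t₀ := by
  have hgrow := hlip t₁ t₀ ht₁.le le_rfl
  rw [he0, sub_zero, abs_of_pos (sub_pos.mpr ht₁)] at hgrow
  -- If `t₁ - t₀ < ξ`, the threshold at `t₁` exceeds its value `B * ξ` at `t₀ + ξ`,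
  -- while `‖e t₁‖ ≤ B * (t₁ - t₀) < B * ξ`.
  by_contra! h
  have hexp : Real.exp (-(κ * (t₀ + ξ))) < Real.exp (-(κ * t₁)) :=
    Real.exp_lt_exp.mpr (neg_lt_neg (mul_lt_mul_of_pos_left (by linarith) hκ))
  have hthr := mul_lt_mul_of_pos_left hexp hA
  have hlin := mul_lt_mul_of_pos_left h hB
  linarith
end

section
/- Let Q and S be n×n real symmetric positive definite matrices and let μ > 0 satisfy μ²·λ_min(Q) > λ_max(S). Then the 2n×2n block matrix [[½·Q, (1/(2μ))·S], [(1/(2μ))·S, ½·S]] is positive definite. -/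
/-!
Twice the quadratic form of the block matrix at `(u, v)` equals, after completing the square,
`(uᵀQu - μ⁻² uᵀSu) + (v + μ⁻¹u)ᵀ S (v + μ⁻¹u)`.
The last term is nonnegative, and the Rayleigh bounds `λ_min(Q)|u|² ≤ uᵀQu` and
`uᵀSu ≤ λ_max(S)|u|²` make the first bracket positive for `u ≠ 0`. If `u = 0`, then `v ≠ 0` and
the form is `vᵀSv > 0`.
-/

open Matrix in
/-- Rayleigh lower bound, from the nonnegativity of the spectrum of `A - λ_min(A)`. -/
lemma iInf_eigenvalues_mul_le {n : ℕ} {A : Matrix (Fin n) (Fin n) ℝ} (hA : A.IsHermitian)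
    (u : Fin n → ℝ) : (⨅ i, hA.eigenvalues i) * (u ⬝ᵥ u) ≤ u ⬝ᵥ (A *ᵥ u) := by
  set c := ⨅ i, hA.eigenvalues i
  have hpsd : (A - algebraMap ℝ _ c).PosSemidef := by
    rw [posSemidef_iff_isHermitian_and_spectrum_nonneg]
    refine ⟨hA.sub (by simp [IsHermitian, algebraMap_eq_diagonal]), ?_⟩
    rw [← spectrum.sub_singleton_eq, hA.spectrum_real_eq_range_eigenvalues]
    rintro _ ⟨_, ⟨i, rfl⟩, _, rfl, rfl⟩
    exact sub_nonneg.2 (ciInf_le (Set.finite_range hA.eigenvalues).bddBelow i)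
  have := hpsd.dotProduct_mulVec_nonneg u
  simp only [star_trivial, sub_mulVec, dotProduct_sub, Algebra.algebraMap_eq_smul_one,
    smul_mulVec, one_mulVec, dotProduct_smul, smul_eq_mul] at this
  linarith

open Matrix in
/-- Rayleigh upper bound, from the nonnegativity of the spectrum of `λ_max(A) - A`. -/
lemma le_iSup_eigenvalues_mul {n : ℕ} {A : Matrix (Fin n) (Fin n) ℝ} (hA : A.IsHermitian)
    (u : Fin n → ℝ) : u ⬝ᵥ (A *ᵥ u) ≤ (⨆ i, hA.eigenvalues i) * (u ⬝ᵥ u) := by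
  set c := ⨆ i, hA.eigenvalues i
  have hpsd : (algebraMap ℝ _ c - A).PosSemidef := by
    rw [posSemidef_iff_isHermitian_and_spectrum_nonneg]
    refine ⟨IsHermitian.sub (by simp [IsHermitian, algebraMap_eq_diagonal]) hA, ?_⟩
    rw [← spectrum.singleton_sub_eq, hA.spectrum_real_eq_range_eigenvalues]
    rintro _ ⟨_, rfl, _, ⟨i, rfl⟩, rfl⟩
    exact sub_nonneg.2 (le_ciSup (Set.finite_range hA.eigenvalues).bddAbove i)
  have := hpsd.dotProduct_mulVec_nonneg u
  simp only [star_trivial, sub_mulVec, dotProduct_sub, Algebra.algebraMap_eq_smul_one,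
    smul_mulVec, one_mulVec, dotProduct_smul, smul_eq_mul] at this
  linarith

open Matrix in
/-- Completing the square in the quadratic form of the block matrix. -/
lemma block_form_eq {n : ℕ} (Q : Matrix (Fin n) (Fin n) ℝ) {S : Matrix (Fin n) (Fin n) ℝ}
    (hS : S.IsHermitian) {μ : ℝ} (hμ : 0 < μ) (x : Fin n ⊕ Fin n → ℝ) :
    x ⬝ᵥ (fromBlocks ((1 / 2 : ℝ) • Q) ((1 / (2 * μ)) • S)
        ((1 / (2 * μ)) • S) ((1 / 2 : ℝ) • S) *ᵥ x) =
      1 / 2 * ((x ∘ Sum.inl) ⬝ᵥ (Q *ᵥ (x ∘ Sum.inl))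
          - (μ ^ 2)⁻¹ * ((x ∘ Sum.inl) ⬝ᵥ (S *ᵥ (x ∘ Sum.inl))))
        + 1 / 2 * ((x ∘ Sum.inr + μ⁻¹ • (x ∘ Sum.inl)) ⬝ᵥ
            (S *ᵥ (x ∘ Sum.inr + μ⁻¹ • (x ∘ Sum.inl)))) := by
  obtain ⟨u, v, rfl⟩ : ∃ u v, x = Sum.elim u v :=
    ⟨_, _, (Sum.elim_comp_inl_inr x).symm⟩
  have hsymm : v ⬝ᵥ (S *ᵥ u) = u ⬝ᵥ (S *ᵥ v) := by
    have hT : Sᵀ = S := by simpa [IsHermitian] using hS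
    rw [dotProduct_mulVec, dotProduct_comm, ← mulVec_transpose, hT]
  simp only [fromBlocks_mulVec, sumElim_dotProduct_sumElim, Sum.elim_comp_inl, Sum.elim_comp_inr,
    smul_mulVec, mulVec_smul, mulVec_add, dotProduct_add, add_dotProduct, dotProduct_smul,
    smul_dotProduct, smul_eq_mul, hsymm]
  field_simp
  ring

/-- If `Q, S` are symmetric positive definite `n×n` real matrices and `μ > 0`
satisfies `μ²·λ_min(Q) > λ_max(S)`, then the `2n×2n` block matrix
`[[½Q, (1/(2μ))S], [(1/(2μ))S, ½S]]` is positive definite. -/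
theorem stmt_14 (n : ℕ) (Q S : Matrix (Fin n) (Fin n) ℝ)
    (hQ : Q.PosDef) (hS : S.PosDef) (μ : ℝ) (hμ : 0 < μ)
    (h : (⨆ i, hS.1.eigenvalues i) < μ ^ 2 * ⨅ i, hQ.1.eigenvalues i) :
    (Matrix.fromBlocks ((1 / 2 : ℝ) • Q) ((1 / (2 * μ)) • S)
      ((1 / (2 * μ)) • S) ((1 / 2 : ℝ) • S)).PosDef := by
  refine .of_dotProduct_mulVec_pos ?_ fun x hx => ?_
  · have hQ1 := hQ.1
    have hS1 := hS.1
    simp only [Matrix.IsHermitian, Matrix.conjTranspose_eq_transpose_of_trivial] at hQ1 hS1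
    simp [Matrix.IsHermitian, Matrix.fromBlocks_transpose, hQ1, hS1]
  rw [star_trivial, block_form_eq Q hS.1 hμ]
  set u := x ∘ Sum.inl with hu
  set v := x ∘ Sum.inr with hv
  by_cases hu0 : u = 0
  · have hv0 : v ≠ 0 := by
      rintro hv0
      apply hx
      rw [← Sum.elim_comp_inl_inr x, ← hu, ← hv, hu0, hv0]
      simp
    simpa [hu0] using hS.dotProduct_mulVec_pos hv0
  · have hsq := hS.posSemidef.dotProduct_mulVec_nonneg (v + μ⁻¹ • u)
    have huu : 0 < u ⬝ᵥ u := by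
      simpa using Matrix.dotProduct_star_self_pos_iff.2 hu0
    have hlow := mul_le_mul_of_nonneg_left (iInf_eigenvalues_mul_le hQ.1 u) (sq_nonneg μ)
    have hupp := le_iSup_eigenvalues_mul hS.1 u
    have hmid := mul_lt_mul_of_pos_right h huu
    have hlt : (μ ^ 2)⁻¹ * (u ⬝ᵥ (S.mulVec u)) < u ⬝ᵥ (Q.mulVec u) := by
      rw [inv_mul_lt_iff₀ (by positivity)]
      linarith
    rw [star_trivial] at hsq
    linarith
end

section
/- Let A be an n×n real matrix all of whose complex eigenvalues have strictly positive real part, let α > 0, let q₀ ∈ ℝⁿ, and let s : [0, ∞) → ℝⁿ be continuous with s(t) → 0 as t → ∞. If q : [0, ∞) → ℝⁿ is differentiable and satisfies q′(t) = −α·A·(q(t) − q₀) + s(t) for all t ≥ 0, then q(t) → q₀ and q′(t) → 0 as t → ∞. -/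
open Matrix

/-!
The proof avoids the matrix exponential. After complexification, `x = q - q₀` satisfies
`x' = -α M x + s` with `M` the complex linear map of `A`. By Cayley–Hamilton, `∏ᵢ (M - λᵢ)`, the
product over the roots of the characteristic polynomial, annihilates `x`. The factors are stripped
off one at a time (`tendsto_zero_of_prod`): `y = (M - λ) x` satisfies an equation of the same kind
with a shorter product, so `y → 0` inductively; then `x' = -α λ x + (s - α y)` is a scalar equation
with vanishing input, and `x → 0` because `Re (α λ) > 0` (`tendsto_zero_of_scalar`).
-/

open Filter Topology Polynomial

/-- The scalar case. With `y = e^{λ t} x`, one has `‖y'‖ ≤ ε e^{ct}` for large `t`, where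
`c = Re λ`; comparing norms from time `T` on gives `‖x t‖ ≤ e^{-ct} ‖y T‖ + ε / c`. -/
lemma tendsto_zero_of_scalar {E : Type*} [NormedAddCommGroup E] [NormedSpace ℂ E]
    (lam : ℂ) (hl : 0 < lam.re) (x u : ℝ → E) (hu : Tendsto u atTop (𝓝 0))
    (hx : ∀ t ∈ Set.Ici (0 : ℝ), HasDerivWithinAt x (-(lam • x t) + u t) (Set.Ici 0) t) :
    Tendsto x atTop (𝓝 0) := by
  set c := lam.re with hc
  have hnexp : ∀ t : ℝ, ‖Complex.exp (lam * t)‖ = Real.exp (c * t) := by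
    intro t
    rw [Complex.norm_exp]
    simp [hc]
  have hy : ∀ t ∈ Set.Ici (0 : ℝ), HasDerivWithinAt (fun t : ℝ => Complex.exp (lam * t) • x t)
      (Complex.exp (lam * t) • u t) (Set.Ici 0) t := by
    intro t ht
    have h1 : HasDerivAt (fun t : ℝ => Complex.exp (lam * t)) (Complex.exp (lam * t) * lam) t := by
      have := ((Complex.ofRealCLM.hasDerivAt (x := t)).const_mul lam).cexp
      simpa using this
    have h2 := h1.hasDerivWithinAt (s := Set.Ici 0) |>.smul (hx t ht)
    refine h2.congr_deriv ?_
    module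
  rw [NormedAddGroup.tendsto_nhds_zero]
  intro δ hδ
  -- The input is bounded by `ε = c δ / 2`, which contributes at most `ε / c = δ / 2`.
  have hε : 0 < c * (δ / 2) := by positivity
  obtain ⟨T₀, hT₀⟩ := eventually_atTop.1 ((NormedAddGroup.tendsto_nhds_zero.1 hu) _ hε)
  set T := max T₀ 0
  have hT0 : 0 ≤ T := le_max_right _ _
  set K := ‖Complex.exp (lam * T) • x T‖ with hK
  have key : ∀ t, T ≤ t → ‖x t‖ ≤ K * Real.exp (-(c * t)) + δ / 2 := by
    intro t ht
    have hB : ∀ r : ℝ, HasDerivAt (fun r => K + δ / 2 * (Real.exp (c * r) - Real.exp (c * T)))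
        (c * (δ / 2) * Real.exp (c * r)) r := by
      intro r
      have h := (((hasDerivAt_id r).const_mul c).exp.sub_const (Real.exp (c * T))).const_mul (δ / 2)
        |>.const_add K
      refine h.congr_deriv ?_
      simp only [id]
      ring
    have := image_norm_le_of_norm_deriv_right_le_deriv_boundary
      (f := fun t : ℝ => Complex.exp (lam * t) • x t)
      (f' := fun t : ℝ => Complex.exp (lam * t) • u t) (a := T) (b := t)
      (B := fun r => K + δ / 2 * (Real.exp (c * r) - Real.exp (c * T)))
      (B' := fun r => c * (δ / 2) * Real.exp (c * r))
      (fun r hr => ((hy r (hT0.trans hr.1)).continuousWithinAt).mono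
        (fun z hz => hT0.trans hz.1))
      (fun r hr => (hy r (hT0.trans hr.1)).mono (fun z hz => (hT0.trans hr.1).trans hz))
      (by simp [hK]) hB
      (fun r hr => by
        rw [norm_smul, hnexp, mul_comm]
        exact mul_le_mul_of_nonneg_right (hT₀ r ((le_max_left _ _).trans hr.1)).le
          (Real.exp_pos _).le)
      (Set.right_mem_Icc.2 ht)
    simp only [norm_smul (Complex.exp (lam * t)), hnexp] at this
    have he : Real.exp (-(c * t)) * Real.exp (c * t) = 1 := by
      rw [← Real.exp_add]; simp
    have hpos := Real.exp_pos (-(c * t))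
    calc ‖x t‖ = Real.exp (-(c * t)) * (Real.exp (c * t) * ‖x t‖) := by
          rw [← mul_assoc, he, one_mul]
      _ ≤ Real.exp (-(c * t)) * (K + δ / 2 * (Real.exp (c * t) - Real.exp (c * T))) := by gcongr
      _ = K * Real.exp (-(c * t)) + δ / 2 * (Real.exp (-(c * t)) * Real.exp (c * t))
          - δ / 2 * (Real.exp (-(c * t)) * Real.exp (c * T)) := by ring
      _ ≤ K * Real.exp (-(c * t)) + δ / 2 := by
          rw [he]
          have : 0 ≤ δ / 2 * (Real.exp (-(c * t)) * Real.exp (c * T)) := by positivity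
          linarith
  have hlim : Tendsto (fun t => K * Real.exp (-(c * t)) + δ / 2) atTop (𝓝 (K * 0 + δ / 2)) :=
    ((Real.tendsto_exp_neg_atTop_nhds_zero.comp
      (tendsto_id.const_mul_atTop hl)).const_mul K).add_const _
  have hlt := hlim.eventually (gt_mem_nhds (show K * 0 + δ / 2 < δ by linarith))
  filter_upwards [hlt, eventually_ge_atTop T] with t h1 h2
  exact (key t h2).trans_lt h1

/-- Stripping the linear factors: if a product of `M - λ`, with all `Re λ > 0`, sends the solution
of `x' = -α M x + s` to something vanishing at infinity, then the solution itself vanishes. -/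
lemma tendsto_zero_of_prod {E : Type*} [NormedAddCommGroup E] [NormedSpace ℂ E]
    [FiniteDimensional ℂ E] (M : Module.End ℂ E) (α : ℝ) (hα : 0 < α) (l : Multiset ℂ)
    (hl : ∀ z ∈ l, 0 < z.re) : ∀ x s : ℝ → E, Tendsto s atTop (𝓝 0) →
    (∀ t ∈ Set.Ici (0 : ℝ),
      HasDerivWithinAt x (-((α : ℂ) • M (x t)) + s t) (Set.Ici 0) t) →
    Tendsto (fun t => aeval M (l.map fun a => X - C a).prod (x t)) atTop (𝓝 0) →
    Tendsto x atTop (𝓝 0) := by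
  induction l using Multiset.induction_on with
  | empty => intro x s _ _ h; simpa using h
  | cons a l ih =>
    intro x s hs hx h
    have ih := ih (fun z hz => hl z (Multiset.mem_cons_of_mem hz))
    let N : E →L[ℂ] E := LinearMap.toContinuousLinearMap (M - algebraMap ℂ (Module.End ℂ E) a)
    have hN : ∀ v, N v = M v - a • v := fun v => by
      simp [N, Module.algebraMap_end_apply]
    have hNs : Tendsto (fun t => N (s t)) atTop (𝓝 0) := by
      simpa [Function.comp_def] using (N.continuous.tendsto 0).comp hs
    have hy : Tendsto (fun t => N (x t)) atTop (𝓝 0) := by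
      refine ih _ (fun t => N (s t)) hNs ?_ ?_
      · intro t ht
        have := (N.restrictScalars ℝ).hasFDerivAt.comp_hasDerivWithinAt t (hx t ht)
        refine this.congr_deriv ?_
        simp only [ContinuousLinearMap.coe_restrictScalars', hN, map_add, map_neg, map_smul,
          map_sub]
        module
      · refine h.congr fun t => ?_
        rw [Multiset.map_cons, Multiset.prod_cons, mul_comm, map_mul, Module.End.mul_apply]
        simp [N]
    refine tendsto_zero_of_scalar (α * a) ?_ x (fun t => -((α : ℂ) • N (x t)) + s t) ?_ ?_
    · simpa using mul_pos hα (hl a (Multiset.mem_cons_self a l))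
    · simpa using ((hy.const_smul (α : ℂ)).neg).add hs
    · intro t ht
      refine (hx t ht).congr_deriv ?_
      rw [hN]
      module

/-- Input-to-state stability: if all complex eigenvalues (roots of the
characteristic polynomial over `ℂ`) of the real matrix `A` have strictly
positive real part, `α > 0`, `s` is continuous with `s(t) → 0`, and `q` solves
`q′(t) = −α·A·(q(t) − q₀) + s(t)` on `[0, ∞)`, then `q(t) → q₀` and `q′(t) → 0`
as `t → ∞`. -/
theorem stmt_15 (n : ℕ) (A : Matrix (Fin n) (Fin n) ℝ)
    (hA : ∀ z : ℂ, (A.charpoly.map (algebraMap ℝ ℂ)).IsRoot z → 0 < z.re)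
    (α : ℝ) (hα : 0 < α) (q₀ : Fin n → ℝ) (s q : ℝ → Fin n → ℝ)
    (hs : ContinuousOn s (Set.Ici 0))
    (hs0 : Filter.Tendsto s Filter.atTop (nhds 0))
    (hq : ∀ t ∈ Set.Ici (0 : ℝ),
      HasDerivWithinAt q (-(α • (A *ᵥ (q t - q₀))) + s t) (Set.Ici 0) t) :
    Filter.Tendsto q Filter.atTop (nhds q₀) ∧
      Filter.Tendsto (fun t => -(α • (A *ᵥ (q t - q₀))) + s t)
        Filter.atTop (nhds 0) := by
  have main : Tendsto q atTop (𝓝 q₀) := by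
    let B : Matrix (Fin n) (Fin n) ℂ := A.map (algebraMap ℝ ℂ)
    have hB : B.charpoly = A.charpoly.map (algebraMap ℝ ℂ) := Matrix.charpoly_map A _
    have hmonic : B.charpoly.Monic := B.charpoly_monic
    have hprod : (B.charpoly.roots.map fun a => X - C a).prod = B.charpoly :=
      ((IsAlgClosed.splits B.charpoly).eq_prod_roots_of_monic hmonic).symm
    have hx : Tendsto (fun t => fun i => ((q t i - q₀ i : ℝ) : ℂ)) atTop (𝓝 0) := by
      refine tendsto_zero_of_prod (Matrix.toLin' B) α hα B.charpoly.roots ?_ _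
        (fun t i => ((s t i : ℝ) : ℂ)) ?_ ?_ ?_
      · intro z hz
        exact hA z (hB ▸ (mem_roots'.1 hz).2)
      · rw [tendsto_pi_nhds] at hs0 ⊢
        intro i
        simpa [Function.comp_def] using (Complex.continuous_ofReal.tendsto 0).comp (hs0 i)
      · intro t ht
        have h := hasDerivWithinAt_pi.1 (hq t ht)
        rw [hasDerivWithinAt_pi]
        intro i
        have h2 := ((h i).sub_const (q₀ i)).ofReal_comp
        refine h2.congr_deriv ?_
        simp [B, Matrix.mulVec, dotProduct]
      · have h0 : aeval (Matrix.toLin' B) B.charpoly = 0 := by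
          have h := congrArg Matrix.toLinAlgEquiv' B.aeval_self_charpoly
          rw [map_zero, ← Polynomial.aeval_algHom_apply] at h
          exact h
        rw [hprod, h0]
        simp
    rw [tendsto_pi_nhds] at hx ⊢
    intro i
    have h := (Complex.continuous_re.tendsto _).comp (hx i)
    simpa using (h.add_const (q₀ i))
  refine ⟨main, ?_⟩
  have hc : Continuous fun v : Fin n → ℝ => -(α • (A *ᵥ (v - q₀))) := by fun_prop
  simpa using ((hc.tendsto q₀).comp main).add hs0
end
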